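/- arXiv:2512.12954 — 4 statements merged into one kernel-verified Lean document; each statement's English description precedes it below -/
import Mathlib

section
/- Let H be a real Hilbert space, let γ > 0, and let A₁, A₂ : H ⇉ H be maximally monotone and paramonotone set-valued operators. Let T_γ := Id − J_{γA₁} + J_{γA₂} ∘ (2J_{γA₁} − Id) be the Douglas–Rachford operator, and set P := zer(A₁ + A₂) and D := zer(A₁⁻¹ − A₂⁻¹ ∘ (−Id)). Then Fix T_γ = P + γD, where P + γD = {x + γy : x ∈ P, y ∈ D}. -/
open scoped Pointwise RealInnerProductSpace

variable {H : Type*}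

/-- A set-valued operator is monotone. -/
def SVMonotone [NormedAddCommGroup H] [InnerProductSpace ℝ H] (A : H → Set H) : Prop :=
  ∀ ⦃x y u v : H⦄, u ∈ A x → v ∈ A y → 0 ≤ ⟪x - y, u - v⟫

/-- The graph of a set-valued operator. -/
def SVGraph (A : H → Set H) : Set (H × H) := {p | p.2 ∈ A p.1}

/-- A set-valued operator is maximally monotone. -/
def MaxMonotone [NormedAddCommGroup H] [InnerProductSpace ℝ H] (A : H → Set H) : Prop :=
  SVMonotone A ∧
    ∀ B : H → Set H, SVMonotone B → SVGraph A ⊆ SVGraph B → SVGraph B = SVGraph A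

/-- A monotone set-valued operator is paramonotone. -/
def Paramonotone [NormedAddCommGroup H] [InnerProductSpace ℝ H] (A : H → Set H) : Prop :=
  SVMonotone A ∧
    ∀ ⦃x y u v : H⦄, u ∈ A x → v ∈ A y → ⟪x - y, u - v⟫ = 0 → v ∈ A x ∧ u ∈ A y

/-- The inverse of a set-valued operator. -/
def SVInv (A : H → Set H) : H → Set H := fun u => {x | u ∈ A x}

/-- The set of fixed points of a single-valued operator. -/
def FixSet (T : H → H) : Set H := {x | T x = x}

/-- `J` is the resolvent `(Id + γA)⁻¹` of the set-valued operator `A`, i.e.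
`J x` is a point with `x - J x ∈ γ • A (J x)` for every `x`. -/
def IsResolventOf [NormedAddCommGroup H] [InnerProductSpace ℝ H] (A : H → Set H) (γ : ℝ) (J : H → H) : Prop :=
  ∀ x : H, x - J x ∈ γ • A (J x)

/-!
Call `(x, y)` a Kuhn–Tucker pair if `y ∈ A₁ x` and `-y ∈ A₂ x`. The Kuhn–Tucker pairs project onto
the primal solutions `P` and the dual solutions `D`, and, since `J_{γA}(x + γu) = x` says exactly
that `u ∈ A x`, the fixed points of the Douglas–Rachford operator are the points `x + γy` with
`(x, y)` a Kuhn–Tucker pair. It remains to see that the Kuhn–Tucker pairs fill the rectangle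
`P × D`. For Kuhn–Tucker pairs `(x, u)` and `(z, y)`, monotonicity of `A₁` gives
`⟪x - z, u - y⟫ ≥ 0` and monotonicity of `A₂` gives `⟪x - z, u - y⟫ ≤ 0`; hence it vanishes, and
paramonotonicity lets `u` and `y` be exchanged.
-/

section Solutions

variable [AddGroup H]

/-- The primal solution set `P = zer (A₁ + A₂)`. -/
def primalSolutions (A₁ A₂ : H → Set H) : Set H := {x | 0 ∈ A₁ x + A₂ x}

/-- The dual solution set `D = zer (A₁⁻¹ - A₂⁻¹ ∘ (-Id))`. -/
def dualSolutions (A₁ A₂ : H → Set H) : Set H := {y | 0 ∈ SVInv A₁ y - SVInv A₂ (-y)}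

/-- The Kuhn–Tucker set of `(A₁, A₂)`: the pairs of a primal solution and a dual solution
certifying it. -/
def kuhnTuckerSet (A₁ A₂ : H → Set H) : Set (H × H) := {p | p.2 ∈ A₁ p.1 ∧ -p.2 ∈ A₂ p.1}

variable {A₁ A₂ : H → Set H} {x y : H}

theorem mem_primalSolutions_iff :
    x ∈ primalSolutions A₁ A₂ ↔ ∃ u, (x, u) ∈ kuhnTuckerSet A₁ A₂ := by
  constructor
  · rintro ⟨u, hu, v, hv, huv : u + v = 0⟩
    obtain rfl : -u = v := neg_eq_of_add_eq_zero_right huv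
    exact ⟨u, hu, hv⟩
  · rintro ⟨u, hu, hu'⟩
    exact ⟨u, hu, -u, hu', add_neg_cancel u⟩

theorem mem_dualSolutions_iff :
    y ∈ dualSolutions A₁ A₂ ↔ ∃ z, (z, y) ∈ kuhnTuckerSet A₁ A₂ := by
  constructor
  · rintro ⟨z, hz, z', hz', hzz' : z - z' = 0⟩
    obtain rfl : z = z' := sub_eq_zero.1 hzz'
    exact ⟨z, hz, hz'⟩
  · rintro ⟨z, hz, hz'⟩
    exact ⟨z, hz, z, hz', sub_self z⟩

end Solutions

section DouglasRachford

variable [AddCommGroup H] [Module ℝ H]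

/-- The Douglas–Rachford operator `Id - J₁ + J₂ ∘ (2J₁ - Id)` of two single-valued maps, to be
applied to the resolvents `J₁ = J_{γA₁}` and `J₂ = J_{γA₂}`. -/
def douglasRachford (J₁ J₂ : H → H) (w : H) : H := w - J₁ w + J₂ ((2 : ℝ) • J₁ w - w)

theorem mem_fixSet_douglasRachford_iff {J₁ J₂ : H → H} {w : H} :
    w ∈ FixSet (douglasRachford J₁ J₂) ↔ J₂ ((2 : ℝ) • J₁ w - w) = J₁ w := by
  change w - J₁ w + J₂ ((2 : ℝ) • J₁ w - w) = w ↔ _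
  rw [← eq_sub_iff_add_eq', sub_sub_cancel]

end DouglasRachford

section InnerProduct

variable [NormedAddCommGroup H] [InnerProductSpace ℝ H] {γ : ℝ} {A A₁ A₂ : H → Set H}
  {J J₁ J₂ : H → H}

theorem Paramonotone.kuhnTuckerSet_exchange (hA₁ : Paramonotone A₁) (hA₂ : Paramonotone A₂)
    {x u z y : H} (hxu : (x, u) ∈ kuhnTuckerSet A₁ A₂) (hzy : (z, y) ∈ kuhnTuckerSet A₁ A₂) :
    (x, y) ∈ kuhnTuckerSet A₁ A₂ := by
  have neg_inner : ⟪x - z, -u - -y⟫ = -⟪x - z, u - y⟫ := by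
    rw [← inner_neg_right, neg_sub_neg, neg_sub]
  have inner_nonneg : 0 ≤ ⟪x - z, u - y⟫ := hA₁.1 hxu.1 hzy.1
  have inner_nonpos : 0 ≤ -⟪x - z, u - y⟫ := neg_inner ▸ hA₂.1 hxu.2 hzy.2
  have inner_eq_zero : ⟪x - z, u - y⟫ = 0 := by linarith
  exact ⟨(hA₁.2 hxu.1 hzy.1 inner_eq_zero).1,
    (hA₂.2 hxu.2 hzy.2 (by rw [neg_inner, inner_eq_zero, neg_zero])).1⟩

theorem Paramonotone.kuhnTuckerSet_eq_prod (hA₁ : Paramonotone A₁) (hA₂ : Paramonotone A₂) :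
    kuhnTuckerSet A₁ A₂ = primalSolutions A₁ A₂ ×ˢ dualSolutions A₁ A₂ := by
  ext ⟨x, y⟩
  rw [Set.mem_prod, mem_primalSolutions_iff, mem_dualSolutions_iff]
  constructor
  · exact fun hxy => ⟨⟨y, hxy⟩, ⟨x, hxy⟩⟩
  · rintro ⟨⟨u, hxu⟩, ⟨z, hzy⟩⟩
    exact hA₁.kuhnTuckerSet_exchange hA₂ hxu hzy

theorem IsResolventOf.exists_add_smul_eq (hJ : IsResolventOf A γ J) (w : H) :
    ∃ u ∈ A (J w), J w + γ • u = w := by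
  obtain ⟨u, hu, hw : γ • u = w - J w⟩ := hJ w
  exact ⟨u, hu, by rw [hw, add_sub_cancel]⟩

theorem SVMonotone.eq_of_add_smul_eq (hA : SVMonotone A) (hγ : 0 < γ) {x y u v : H}
    (hu : u ∈ A x) (hv : v ∈ A y) (h : x + γ • u = y + γ • v) : x = y := by
  have sub_eq : x - y = -(γ • (u - v)) := by
    rw [smul_sub, neg_sub, sub_eq_sub_iff_add_eq_add, h, add_comm]
  have mul_norm_nonpos : γ * ‖u - v‖ ^ 2 ≤ 0 := by
    have := hA hu hv
    rw [sub_eq, inner_neg_left, real_inner_smul_left, real_inner_self_eq_norm_sq] at this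
    linarith
  have huv : u = v := by
    have : ‖u - v‖ ^ 2 ≤ 0 := nonpos_of_mul_nonpos_right mul_norm_nonpos hγ
    rwa [sq_nonpos_iff, norm_sub_eq_zero_iff] at this
  rwa [huv, add_left_inj] at h

theorem IsResolventOf.apply_add_smul_eq_iff (hJ : IsResolventOf A γ J) (hA : SVMonotone A)
    (hγ : 0 < γ) {x u : H} : J (x + γ • u) = x ↔ u ∈ A x := by
  obtain ⟨v, hv, hvu⟩ := hJ.exists_add_smul_eq (x + γ • u)
  constructor
  · intro hx
    rw [hx] at hv hvu
    rwa [← smul_right_injective H hγ.ne' (add_left_cancel hvu)]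
  · exact fun hu => hA.eq_of_add_smul_eq hγ hv hu hvu

theorem fixSet_douglasRachford_eq_image_kuhnTuckerSet (hγ : 0 < γ) (hA₁ : SVMonotone A₁)
    (hA₂ : SVMonotone A₂) (hJ₁ : IsResolventOf A₁ γ J₁) (hJ₂ : IsResolventOf A₂ γ J₂) :
    FixSet (douglasRachford J₁ J₂) = (fun p => p.1 + γ • p.2) '' kuhnTuckerSet A₁ A₂ := by
  have reflect (x y : H) : (2 : ℝ) • x - (x + γ • y) = x + γ • -y := by module
  have mem_fixSet_iff {x y : H} (hy : y ∈ A₁ x) :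
      x + γ • y ∈ FixSet (douglasRachford J₁ J₂) ↔ -y ∈ A₂ x := by
    rw [mem_fixSet_douglasRachford_iff, (hJ₁.apply_add_smul_eq_iff hA₁ hγ).2 hy, reflect,
      hJ₂.apply_add_smul_eq_iff hA₂ hγ]
  ext w
  constructor
  · intro hw
    obtain ⟨y, hy, hyw⟩ := hJ₁.exists_add_smul_eq w
    exact ⟨(J₁ w, y), ⟨hy, (mem_fixSet_iff hy).1 (hyw.symm ▸ hw)⟩, hyw⟩
  · rintro ⟨⟨x, y⟩, ⟨hy, hy'⟩, rfl⟩
    exact (mem_fixSet_iff hy).2 hy'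

theorem stmt1_general (hγ : 0 < γ) (hA₁ : Paramonotone A₁) (hA₂ : Paramonotone A₂)
    (hJ₁ : IsResolventOf A₁ γ J₁) (hJ₂ : IsResolventOf A₂ γ J₂) :
    FixSet (douglasRachford J₁ J₂) = primalSolutions A₁ A₂ + γ • dualSolutions A₁ A₂ := by
  rw [fixSet_douglasRachford_eq_image_kuhnTuckerSet hγ hA₁.1 hA₂.1 hJ₁ hJ₂,
    hA₁.kuhnTuckerSet_eq_prod hA₂, Set.image_prod fun x y => x + γ • y, ← Set.image2_add,
    ← Set.image_smul, Set.image2_image_right]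

end InnerProduct

/-- for maximally monotone paramonotone `A₁, A₂` and `γ > 0`, the fixed
points of the Douglas–Rachford operator `T_γ = Id − J_{γA₁} + J_{γA₂}(2J_{γA₁} − Id)` are
exactly `P + γD`, the sum of the primal solutions and `γ` times the dual solutions. -/
theorem stmt1 [NormedAddCommGroup H] [InnerProductSpace ℝ H] [CompleteSpace H]
    (γ : ℝ) (hγ : 0 < γ) (A₁ A₂ : H → Set H)
    (h₁ : MaxMonotone A₁) (h₂ : MaxMonotone A₂)
    (hp₁ : Paramonotone A₁) (hp₂ : Paramonotone A₂)
    (J₁ J₂ : H → H) (hJ₁ : IsResolventOf A₁ γ J₁) (hJ₂ : IsResolventOf A₂ γ J₂) :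
    FixSet (fun x => x - J₁ x + J₂ ((2 : ℝ) • J₁ x - x)) =
      {x : H | (0 : H) ∈ A₁ x + A₂ x} +
        γ • {y : H | (0 : H) ∈ SVInv A₁ y - SVInv A₂ (-y)} :=
  stmt1_general hγ hp₁ hp₂ hJ₁ hJ₂
end

section
/- Let H be a real Hilbert space, Γ ⊆ (0,∞) a nonempty set, (T_γ)_{γ∈Γ} a family of operators on H with Fix T_γ ≠ ∅ for all γ ∈ Γ, and (Q_{δ←γ})_{δ,γ∈Γ} fixed-point relocators for (T_γ)_{γ∈Γ} satisfying Assumption A. Suppose (γ_n)_{n∈ℕ} ⊆ Γ converges R-linearly to some γ* ∈ Γ. Given c₀ ∈ Fix T_{γ₀}, define c_{n+1} := Q_{γ_{n+1}←γ_n} c_n for all n ∈ ℕ. Then c_n ∈ Fix T_{γ_n} for all n ∈ ℕ, and (c_n)_{n∈ℕ} converges R-linearly to Q_{γ*←γ₀}c₀ ∈ Fix T_{γ*}. -/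
variable {H : Type*}

/-- `(Q δ γ)_{δ,γ ∈ Γ}` is a family of fixed-point relocators for the family of
operators `(T γ)_{γ ∈ Γ}` with Lipschitz constants `(L δ γ)_{δ,γ ∈ Γ}` in `[1,∞)`. -/
def IsRelocators [NormedAddCommGroup H] (Γ : Set ℝ) (T : ℝ → H → H)
    (Q : ℝ → ℝ → H → H) (L : ℝ → ℝ → ℝ) : Prop :=
  (∀ γ ∈ Γ, ∀ δ ∈ Γ, Set.BijOn (Q δ γ) (FixSet (T γ)) (FixSet (T δ))) ∧
  (∀ γ ∈ Γ, ∀ x ∈ FixSet (T γ), ContinuousOn (fun δ : ℝ => Q δ γ x) Γ) ∧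
  (∀ γ ∈ Γ, ∀ δ ∈ Γ, ∀ ε ∈ Γ, ∀ x ∈ FixSet (T γ), Q ε δ (Q δ γ x) = Q ε γ x) ∧
  (∀ γ ∈ Γ, ∀ δ ∈ Γ, 1 ≤ L δ γ ∧ ∀ x y : H, ‖Q δ γ x - Q δ γ y‖ ≤ L δ γ * ‖x - y‖)

/-- Assumption A: on every bounded subset `S` of `⋃_{γ∈Γ} (Fix T_γ × {γ})`, the
relocators satisfy `‖Q δ γ x − Q γ γ x‖ ≤ L |δ − γ|` for some `L > 0`. -/
def AssumptionA [NormedAddCommGroup H] (Γ : Set ℝ) (T : ℝ → H → H)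
    (Q : ℝ → ℝ → H → H) : Prop :=
  ∀ S : Set (H × ℝ), S ⊆ (⋃ γ ∈ Γ, FixSet (T γ) ×ˢ ({γ} : Set ℝ)) →
    Bornology.IsBounded S →
    ∃ L : ℝ, 0 < L ∧ ∀ δ ∈ Γ, ∀ p ∈ S, ‖Q δ p.2 p.1 - Q p.2 p.2 p.1‖ ≤ L * |δ - p.2|

/-- A sequence converges `R`-linearly to a point. -/
def RLinearTo {E : Type*} [NormedAddCommGroup E] (x : ℕ → E) (p : E) : Prop :=
  ∃ C : ℝ, 0 ≤ C ∧ ∃ r ∈ Set.Ioo (0 : ℝ) 1, ∀ n : ℕ, ‖x n - p‖ ≤ C * r ^ n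

/-!
By the cocycle identity the relocated sequence is `c_n = Q_{γ_n←γ₀} c₀ = Q_{γ_n←γ*} c*`, where
`c* = Q_{γ*←γ₀} c₀`, while `c* = Q_{γ*←γ*} c*`. Assumption A at the single point `(c*, γ*)`
therefore bounds `‖c_n - c*‖` by a multiple of `|γ_n - γ*|`.
-/

/-- Transport between the members of a family of sets `F γ`, `γ ∈ Γ`: the maps
`Q δ γ : F γ → F δ` form an action of the pair groupoid of `Γ`. For fixed-point relocators,
`F γ` is the fixed-point set of `T γ`. As with relocators, the target index is written first, and
nothing is required of `Q δ γ` outside `F γ`. -/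
structure IsTransport {ι X : Type*} (Γ : Set ι) (F : ι → Set X) (Q : ι → ι → X → X) : Prop where
  mapsTo : ∀ γ ∈ Γ, ∀ δ ∈ Γ, Set.MapsTo (Q δ γ) (F γ) (F δ)
  apply_self : ∀ γ ∈ Γ, ∀ x ∈ F γ, Q γ γ x = x
  apply_apply : ∀ γ ∈ Γ, ∀ δ ∈ Γ, ∀ ε ∈ Γ, ∀ x ∈ F γ, Q ε δ (Q δ γ x) = Q ε γ x

namespace IsTransport

variable {ι X : Type*} {Γ : Set ι} {F : ι → Set X} {Q : ι → ι → X → X}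

theorem eq_apply_zero (hQ : IsTransport Γ F Q) {γ : ℕ → ι} (hγ : ∀ n, γ n ∈ Γ)
    {c : ℕ → X} (hc₀ : c 0 ∈ F (γ 0)) (hc : ∀ n, c (n + 1) = Q (γ (n + 1)) (γ n) (c n)) (n : ℕ) :
    c n = Q (γ n) (γ 0) (c 0) := by
  induction n with
  | zero => exact (hQ.apply_self _ (hγ 0) _ hc₀).symm
  | succ n ih => rw [hc, ih, hQ.apply_apply _ (hγ 0) _ (hγ n) _ (hγ (n + 1)) _ hc₀]

theorem mem_of_recurrence (hQ : IsTransport Γ F Q) {γ : ℕ → ι} (hγ : ∀ n, γ n ∈ Γ)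
    {c : ℕ → X} (hc₀ : c 0 ∈ F (γ 0)) (hc : ∀ n, c (n + 1) = Q (γ (n + 1)) (γ n) (c n)) (n : ℕ) :
    c n ∈ F (γ n) := by
  rw [hQ.eq_apply_zero hγ hc₀ hc n]
  exact hQ.mapsTo _ (hγ 0) _ (hγ n) hc₀

end IsTransport

theorem IsRelocators.isTransport [NormedAddCommGroup H] {Γ : Set ℝ} {T : ℝ → H → H}
    {Q : ℝ → ℝ → H → H} {L : ℝ → ℝ → ℝ} (hQ : IsRelocators Γ T Q L) :
    IsTransport Γ (fun γ => FixSet (T γ)) Q := by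
  obtain ⟨bijOn, -, apply_apply, -⟩ := hQ
  refine ⟨fun γ hγ δ hδ => (bijOn γ hγ δ hδ).mapsTo, fun γ hγ x hx => ?_, apply_apply⟩
  -- `Q γ γ` is idempotent on `FixSet (T γ)` by the cocycle identity; cancel one application.
  have bijOn_self := bijOn γ hγ γ hγ
  exact bijOn_self.injOn (bijOn_self.mapsTo hx) hx (apply_apply γ hγ γ hγ γ hγ x hx)

theorem AssumptionA.exists_norm_sub_le [NormedAddCommGroup H] {Γ : Set ℝ} {T : ℝ → H → H}
    {Q : ℝ → ℝ → H → H} (hA : AssumptionA Γ T Q) {γ : ℝ} (hγ : γ ∈ Γ) {x : H}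
    (hx : x ∈ FixSet (T γ)) :
    ∃ K : ℝ, ∀ δ ∈ Γ, ‖Q δ γ x - Q γ γ x‖ ≤ K * ‖δ - γ‖ := by
  have singleton_subset : {(x, γ)} ⊆ ⋃ γ ∈ Γ, FixSet (T γ) ×ˢ ({γ} : Set ℝ) :=
    Set.singleton_subset_iff.2 (Set.mem_biUnion hγ ⟨hx, rfl⟩)
  obtain ⟨K, -, hK⟩ := hA _ singleton_subset Bornology.isBounded_singleton
  exact ⟨K, fun δ hδ => hK δ hδ (x, γ) rfl⟩

theorem RLinearTo.of_norm_sub_le {E F : Type*} [NormedAddCommGroup E] [NormedAddCommGroup F]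
    {x : ℕ → E} {p : E} {y : ℕ → F} {q : F} {K : ℝ} (hx : RLinearTo x p)
    (hy : ∀ n, ‖y n - q‖ ≤ K * ‖x n - p‖) : RLinearTo y q := by
  obtain ⟨C, hC, r, hr, hxC⟩ := hx
  refine ⟨|K| * C, by positivity, r, hr, fun n => ?_⟩
  calc ‖y n - q‖ ≤ K * ‖x n - p‖ := hy n
    _ ≤ |K| * (C * r ^ n) := by gcongr; exacts [le_abs_self K, hxC n]
    _ = |K| * C * r ^ n := (mul_assoc _ _ _).symm

theorem stmt6_general {E X : Type*} [NormedAddCommGroup E] [NormedAddCommGroup X]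
    {Γ : Set E} {F : E → Set X} {Q : E → E → X → X} (hQ : IsTransport Γ F Q)
    {γ : ℕ → E} (hγ : ∀ n, γ n ∈ Γ) {γs : E} (hγs : γs ∈ Γ) (hγlin : RLinearTo γ γs)
    (hcalm : ∀ x ∈ F γs, ∃ K : ℝ, ∀ δ ∈ Γ, ‖Q δ γs x - Q γs γs x‖ ≤ K * ‖δ - γs‖)
    {c : ℕ → X} (hc₀ : c 0 ∈ F (γ 0)) (hc : ∀ n, c (n + 1) = Q (γ (n + 1)) (γ n) (c n)) :
    (∀ n, c n ∈ F (γ n)) ∧ Q γs (γ 0) (c 0) ∈ F γs ∧ RLinearTo c (Q γs (γ 0) (c 0)) := by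
  have limit_mem : Q γs (γ 0) (c 0) ∈ F γs := hQ.mapsTo _ (hγ 0) _ hγs hc₀
  have apply_limit : ∀ δ ∈ Γ, Q δ γs (Q γs (γ 0) (c 0)) = Q δ (γ 0) (c 0) :=
    fun δ hδ => hQ.apply_apply _ (hγ 0) _ hγs δ hδ _ hc₀
  obtain ⟨K, hK⟩ := hcalm _ limit_mem
  refine ⟨hQ.mem_of_recurrence hγ hc₀ hc, limit_mem, hγlin.of_norm_sub_le (K := K) fun n => ?_⟩
  have norm_sub_le := hK (γ n) (hγ n)
  rwa [apply_limit _ (hγ n), apply_limit _ hγs, ← hQ.eq_apply_zero hγ hc₀ hc n] at norm_sub_le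

/-- if the relocated sequence `c_{n+1} = Q_{γ_{n+1}←γ_n} c_n` starts at a
fixed point of `T_{γ₀}` and the stepsizes converge `R`-linearly to `γ* ∈ Γ`, then
`c_n ∈ Fix T_{γ_n}` for all `n`, and `(c_n)` converges `R`-linearly to
`Q_{γ*←γ₀} c₀ ∈ Fix T_{γ*}`. -/
theorem stmt6 [NormedAddCommGroup H] [InnerProductSpace ℝ H] [CompleteSpace H]
    (Γ : Set ℝ) (hΓne : Γ.Nonempty) (hΓ : Γ ⊆ Set.Ioi (0 : ℝ))
    (T : ℝ → H → H) (Q : ℝ → ℝ → H → H) (L : ℝ → ℝ → ℝ)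
    (hFix : ∀ γ ∈ Γ, (FixSet (T γ)).Nonempty)
    (hQ : IsRelocators Γ T Q L)
    (hA : AssumptionA Γ T Q)
    (γseq : ℕ → ℝ) (hγmem : ∀ n, γseq n ∈ Γ)
    (γs : ℝ) (hγs : γs ∈ Γ) (hγlin : RLinearTo γseq γs)
    (c : ℕ → H) (hc0 : c 0 ∈ FixSet (T (γseq 0)))
    (hcrec : ∀ n : ℕ, c (n + 1) = Q (γseq (n + 1)) (γseq n) (c n)) :
    (∀ n : ℕ, c n ∈ FixSet (T (γseq n))) ∧
    Q γs (γseq 0) (c 0) ∈ FixSet (T γs) ∧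
    RLinearTo c (Q γs (γseq 0) (c 0)) :=
  stmt6_general hQ.isTransport hγmem hγs hγlin (fun _ hx => hA.exists_norm_sub_le hγs hx) hc0 hcrec
end

section
/- Let H be a real Hilbert space, Γ ⊆ (0,∞) a nonempty set, α ∈ (0,1), (T_γ)_{γ∈Γ} a family of α-averaged nonexpansive operators on H with Fix T_γ ≠ ∅ for all γ ∈ Γ, and (Q_{δ←γ})_{δ,γ∈Γ} fixed-point relocators for (T_γ)_{γ∈Γ} with Lipschitz constants (L_{δ←γ})_{δ,γ∈Γ} in [1,∞). Suppose: Assumption A holds; the map (x,γ) ↦ T_γx is continuous on H × Γ; (T_γ)_{γ∈Γ} is uniformly boundedly linearly regular; (γ_n)_{n∈ℕ} ⊆ Γ converges R-linearly to some γ* ∈ Γ; and ∑_{n∈ℕ}(L_{γ_{n+1}←γ_n} − 1) < +∞. Given x₀ ∈ H, define x_{n+1} := Q_{γ_{n+1}←γ_n}(T_{γ_n}x_n) for all n ∈ ℕ. Then the sequence (dist(x_n, Fix T_{γ_n}))_{n∈ℕ} converges R-linearly to zero, i.e., there exist C ≥ 0 and r ∈ (0,1) with dist(x_n, Fix T_{γ_n})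 ≤ C rⁿ for all n ∈ ℕ. -/
variable {H : Type*}

/-- `T` is an `α`-averaged nonexpansive operator. -/
def AveragedNE [NormedAddCommGroup H] [InnerProductSpace ℝ H] (α : ℝ) (T : H → H) : Prop :=
  ∀ x y : H, ‖T x - T y‖ ^ 2 + ((1 - α) / α) * ‖(x - T x) - (y - T y)‖ ^ 2 ≤ ‖x - y‖ ^ 2

/-- The family `(T γ)_{γ ∈ Γ}` is uniformly boundedly linearly regular. -/
def UnifBddLinReg [NormedAddCommGroup H] (Γ : Set ℝ) (T : ℝ → H → H) : Prop :=
  ∀ S : Set H, S.Nonempty → Bornology.IsBounded S →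
    ∃ κ : ℝ, 0 < κ ∧ ∀ x ∈ S, ∀ γ ∈ Γ,
      Metric.infDist x (FixSet (T γ)) ≤ κ * ‖x - T γ x‖

/-!
Averagedness gives `dist (T x, Fix T)² + (1 - α)/α * ‖x - T x‖² ≤ dist (x, Fix T)²`, which linear
regularity turns into the contraction `dist (T x, Fix T) ≤ ρ * dist (x, Fix T)` with `ρ < 1`. A
relocator maps `Fix T_γ` into `Fix T_δ`, so it expands the distance to the fixed-point set by at
most its Lipschitz constant, and the product of all these constants is finite by summability of
`L - 1`. The regularity modulus `κ` is uniform along the orbit because the orbit is bounded: its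
distance to the relocated images of one fixed point of `T_γ*` obeys the same recursion with
`ρ = 1`, and these images converge.
-/

open Filter Metric Set
open scoped Topology

theorem le_exp_tsum_mul_mul_pow {u l : ℕ → ℝ} {ρ : ℝ} (hu₀ : 0 ≤ u 0) (hl : ∀ n, 1 ≤ l n)
    (hsum : Summable fun n => l n - 1) (hρ : 0 ≤ ρ) (hu : ∀ n, u (n + 1) ≤ l n * (ρ * u n))
    (n : ℕ) : u n ≤ Real.exp (∑' k, (l k - 1)) * u 0 * ρ ^ n := by
  have hl_sub : ∀ k, 0 ≤ l k - 1 := fun k => sub_nonneg.2 (hl k)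
  have u_le_prod : u n ≤ u 0 * ∏ k ∈ Finset.range n, l k * ρ := by
    simpa using discrete_gronwall_prod_general (n₀ := 0) (b := 0) (c := fun k => l k * ρ)
      (fun k _ => by simpa [mul_assoc] using hu k)
      (fun k _ => mul_nonneg (zero_le_one.trans (hl k)) hρ) n.zero_le
  have prod_le_exp : ∏ k ∈ Finset.range n, l k ≤ Real.exp (∑' k, (l k - 1)) := calc
    ∏ k ∈ Finset.range n, l k = ∏ k ∈ Finset.range n, (1 + (l k - 1)) := by simp
    _ ≤ Real.exp (∑ k ∈ Finset.range n, (l k - 1)) := Real.prod_one_add_le_exp_sum _ hl_sub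
    _ ≤ Real.exp (∑' k, (l k - 1)) := by
      gcongr
      exact hsum.sum_le_tsum _ fun k _ => hl_sub k
  calc u n ≤ u 0 * ((∏ k ∈ Finset.range n, l k) * ρ ^ n) := by
        simpa [Finset.prod_mul_distrib] using u_le_prod
    _ ≤ u 0 * (Real.exp (∑' k, (l k - 1)) * ρ ^ n) := by gcongr
    _ = Real.exp (∑' k, (l k - 1)) * u 0 * ρ ^ n := by ring

theorem exists_le_mul_pow_of_summable {u l : ℕ → ℝ} {ρ : ℝ} (hu₀ : 0 ≤ u 0) (hl : ∀ n, 1 ≤ l n)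
    (hsum : Summable fun n => l n - 1) (hρ : ρ ∈ Ico 0 1)
    (hu : ∀ n, u (n + 1) ≤ l n * (ρ * u n)) :
    ∃ C : ℝ, 0 ≤ C ∧ ∃ r ∈ Ioo (0 : ℝ) 1, ∀ n, u n ≤ C * r ^ n := by
  have hC : 0 ≤ Real.exp (∑' k, (l k - 1)) * u 0 := by positivity
  -- `ρ` itself may be `0`, which is not an admissible rate.
  refine ⟨_, hC, max ρ 2⁻¹, ⟨by positivity, max_lt hρ.2 (by norm_num)⟩, fun n => ?_⟩
  calc u n ≤ Real.exp (∑' k, (l k - 1)) * u 0 * ρ ^ n :=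
        le_exp_tsum_mul_mul_pow hu₀ hl hsum hρ.1 hu n
    _ ≤ Real.exp (∑' k, (l k - 1)) * u 0 * max ρ 2⁻¹ ^ n := by
        gcongr
        exacts [hρ.1, le_max_left _ _]

theorem infDist_map_le_mul_infDist {X Y : Type*} [PseudoMetricSpace X] [PseudoMetricSpace Y]
    {K : NNReal} {f : X → Y} {s : Set X} {t : Set Y} (hf : LipschitzWith K f) (hst : MapsTo f s t)
    (hs : s.Nonempty) (x : X) : infDist (f x) t ≤ K * infDist x s := by
  have : Nonempty s := hs.to_subtype
  rw [infDist_eq_iInf (s := s), Real.mul_iInf_of_nonneg K.coe_nonneg]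
  exact le_ciInf fun y => (infDist_le_dist_of_mem (hst y.2)).trans (hf.dist_le_mul x y)

theorem RLinearTo.tendsto {E : Type*} [NormedAddCommGroup E] {x : ℕ → E} {p : E}
    (hx : RLinearTo x p) : Tendsto x atTop (𝓝 p) := by
  obtain ⟨C, -, r, hr, hxr⟩ := hx
  refine tendsto_iff_norm_sub_tendsto_zero.2 (squeeze_zero (fun n => norm_nonneg _) hxr ?_)
  simpa using (tendsto_pow_atTop_nhds_zero_of_lt_one hr.1.le hr.2).const_mul C

namespace AveragedNE

variable [NormedAddCommGroup H] [InnerProductSpace ℝ H] {α κ : ℝ} {T : H → H}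

theorem lipschitzWith_one (hT : AveragedNE α T) (hα : α ∈ Ioc 0 1) : LipschitzWith 1 T := by
  have hc : 0 ≤ (1 - α) / α := div_nonneg (sub_nonneg.2 hα.2) hα.1.le
  refine LipschitzWith.mk_one fun x y => ?_
  rw [dist_eq_norm, dist_eq_norm]
  exact le_of_sq_le_sq (le_of_add_le_of_nonneg_left (hT x y) (by positivity)) (norm_nonneg _)

theorem dist_sq_add_le (hT : AveragedNE α T) {y : H} (hy : y ∈ FixSet T) (x : H) :
    dist (T x) y ^ 2 + (1 - α) / α * ‖x - T x‖ ^ 2 ≤ dist x y ^ 2 := by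
  have hTy : T y = y := hy
  simpa [hTy, dist_eq_norm] using hT x y

theorem infDist_sq_add_le (hT : AveragedNE α T) (hFix : (FixSet T).Nonempty) (x : H) :
    infDist (T x) (FixSet T) ^ 2 + (1 - α) / α * ‖x - T x‖ ^ 2 ≤ infDist x (FixSet T) ^ 2 := by
  refine (Real.sqrt_le_iff.1 ((le_infDist hFix).2 fun y hy => ?_)).2
  refine Real.sqrt_le_iff.2 ⟨dist_nonneg, ?_⟩
  calc infDist (T x) (FixSet T) ^ 2 + (1 - α) / α * ‖x - T x‖ ^ 2
      ≤ dist (T x) y ^ 2 + (1 - α) / α * ‖x - T x‖ ^ 2 := by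
        gcongr
        · exact infDist_nonneg
        · exact infDist_le_dist_of_mem hy
    _ ≤ dist x y ^ 2 := hT.dist_sq_add_le hy x

theorem infDist_map_le_sqrt_mul (hT : AveragedNE α T) (hα : α ∈ Ioc 0 1) (hκ : 0 < κ)
    (hFix : (FixSet T).Nonempty) {x : H} (hx : infDist x (FixSet T) ≤ κ * ‖x - T x‖) :
    infDist (T x) (FixSet T) ≤ √(1 - (1 - α) / α / κ ^ 2) * infDist x (FixSet T) := by
  set c := (1 - α) / α
  have hc : 0 ≤ c := div_nonneg (sub_nonneg.2 hα.2) hα.1.le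
  have hdecrease : c / κ ^ 2 * infDist x (FixSet T) ^ 2 ≤ c * ‖x - T x‖ ^ 2 := calc
    c / κ ^ 2 * infDist x (FixSet T) ^ 2 ≤ c / κ ^ 2 * (κ * ‖x - T x‖) ^ 2 := by
      gcongr
      exact infDist_nonneg
    _ = c * ‖x - T x‖ ^ 2 := by field_simp
  have hsq : infDist (T x) (FixSet T) ^ 2 ≤ (1 - c / κ ^ 2) * infDist x (FixSet T) ^ 2 := by
    linarith [hT.infDist_sq_add_le hFix x]
  calc infDist (T x) (FixSet T) ≤ √((1 - c / κ ^ 2) * infDist x (FixSet T) ^ 2) :=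
        Real.le_sqrt_of_sq_le hsq
    _ = √(1 - c / κ ^ 2) * infDist x (FixSet T) := by
      rw [Real.sqrt_mul' _ (sq_nonneg _), Real.sqrt_sq infDist_nonneg]

end AveragedNE

/-- `x` is an orbit of the relocated fixed-point iteration: a step of `T (γ n)` followed by
relocation from the parameter `γ n` to `γ (n + 1)`. -/
def IsRelocatedOrbit (T : ℝ → H → H) (Q : ℝ → ℝ → H → H) (γ : ℕ → ℝ) (x : ℕ → H) : Prop :=
  ∀ n, x (n + 1) = Q (γ (n + 1)) (γ n) (T (γ n) (x n))

namespace IsRelocators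

variable [NormedAddCommGroup H] {Γ : Set ℝ} {T : ℝ → H → H} {Q : ℝ → ℝ → H → H} {L : ℝ → ℝ → ℝ}

theorem mapsTo (hQ : IsRelocators Γ T Q L) {γ δ : ℝ} (hγ : γ ∈ Γ) (hδ : δ ∈ Γ) :
    MapsTo (Q δ γ) (FixSet (T γ)) (FixSet (T δ)) :=
  (hQ.1 γ hγ δ hδ).mapsTo

theorem continuousOn (hQ : IsRelocators Γ T Q L) {γ : ℝ} (hγ : γ ∈ Γ) {z : H}
    (hz : z ∈ FixSet (T γ)) : ContinuousOn (fun δ => Q δ γ z) Γ :=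
  hQ.2.1 γ hγ z hz

theorem apply_apply (hQ : IsRelocators Γ T Q L) {γ δ ε : ℝ} (hγ : γ ∈ Γ) (hδ : δ ∈ Γ) (hε : ε ∈ Γ)
    {z : H} (hz : z ∈ FixSet (T γ)) : Q ε δ (Q δ γ z) = Q ε γ z :=
  hQ.2.2.1 γ hγ δ hδ ε hε z hz

theorem one_le (hQ : IsRelocators Γ T Q L) {γ δ : ℝ} (hγ : γ ∈ Γ) (hδ : δ ∈ Γ) : 1 ≤ L δ γ :=
  (hQ.2.2.2 γ hγ δ hδ).1

theorem dist_le (hQ : IsRelocators Γ T Q L) {γ δ : ℝ} (hγ : γ ∈ Γ) (hδ : δ ∈ Γ) (x y : H) :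
    dist (Q δ γ x) (Q δ γ y) ≤ L δ γ * dist x y := by
  simpa only [dist_eq_norm] using (hQ.2.2.2 γ hγ δ hδ).2 x y

theorem infDist_le (hQ : IsRelocators Γ T Q L) {γ δ : ℝ} (hγ : γ ∈ Γ) (hδ : δ ∈ Γ)
    (hFix : (FixSet (T γ)).Nonempty) (x : H) :
    infDist (Q δ γ x) (FixSet (T δ)) ≤ L δ γ * infDist x (FixSet (T γ)) := by
  have hL : 0 ≤ L δ γ := zero_le_one.trans (hQ.one_le hγ hδ)
  simpa only [Real.coe_toNNReal _ hL] using infDist_map_le_mul_infDist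
    (LipschitzWith.of_dist_le' (hQ.dist_le hγ hδ)) (hQ.mapsTo hγ hδ) hFix x

variable {γ : ℕ → ℝ} {γs : ℝ} {x : ℕ → H} {z : H}

theorem dist_relocatedOrbit_succ_le (hQ : IsRelocators Γ T Q L)
    (hT : ∀ γ ∈ Γ, LipschitzWith 1 (T γ)) (hγ : ∀ n, γ n ∈ Γ) (hγs : γs ∈ Γ)
    (hz : z ∈ FixSet (T γs)) (hx : IsRelocatedOrbit T Q γ x) (n : ℕ) :
    dist (x (n + 1)) (Q (γ (n + 1)) γs z) ≤ L (γ (n + 1)) (γ n) * dist (x n) (Q (γ n) γs z) := by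
  set y := Q (γ n) γs z with hy
  have hTy : T (γ n) y = y := hQ.mapsTo hγs (hγ n) hz
  have hL : 0 ≤ L (γ (n + 1)) (γ n) := zero_le_one.trans (hQ.one_le (hγ n) (hγ (n + 1)))
  calc dist (x (n + 1)) (Q (γ (n + 1)) γs z)
      = dist (Q (γ (n + 1)) (γ n) (T (γ n) (x n))) (Q (γ (n + 1)) (γ n) (T (γ n) y)) := by
        rw [hx n, hTy, hy, hQ.apply_apply hγs (hγ n) (hγ (n + 1)) hz]
    _ ≤ L (γ (n + 1)) (γ n) * dist (T (γ n) (x n)) (T (γ n) y) :=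
        hQ.dist_le (hγ n) (hγ (n + 1)) _ _
    _ ≤ L (γ (n + 1)) (γ n) * dist (x n) y := by
        gcongr
        simpa using (hT (γ n) (hγ n)).dist_le_mul (x n) y

theorem isBounded_range_relocatedOrbit (hQ : IsRelocators Γ T Q L)
    (hT : ∀ γ ∈ Γ, LipschitzWith 1 (T γ)) (hγ : ∀ n, γ n ∈ Γ) (hγs : γs ∈ Γ)
    (hlim : Tendsto γ atTop (𝓝 γs)) (hFix : (FixSet (T γs)).Nonempty)
    (hsum : Summable fun n => L (γ (n + 1)) (γ n) - 1) (hx : IsRelocatedOrbit T Q γ x) :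
    Bornology.IsBounded (range x) := by
  obtain ⟨z, hz⟩ := hFix
  have hQz : Tendsto (fun n => Q (γ n) γs z) atTop (𝓝 (Q γs γs z)) :=
    (hQ.continuousOn hγs hz γs hγs).tendsto.comp
      (tendsto_nhdsWithin_iff.2 ⟨hlim, Eventually.of_forall hγ⟩)
  obtain ⟨R, hR⟩ := (isBounded_range_of_tendsto _ hQz).subset_closedBall 0
  have hdist := le_exp_tsum_mul_mul_pow (u := fun n => dist (x n) (Q (γ n) γs z)) dist_nonneg
    (fun n => hQ.one_le (hγ n) (hγ (n + 1))) hsum zero_le_one fun n => by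
      simpa only [one_mul] using hQ.dist_relocatedOrbit_succ_le hT hγ hγs hz hx n
  simp only [one_pow, mul_one] at hdist
  obtain ⟨M, hM⟩ : ∃ M, ∀ n, dist (x n) (Q (γ n) γs z) ≤ M := ⟨_, hdist⟩
  refine (isBounded_iff_subset_closedBall 0).2 ⟨M + R, range_subset_iff.2 fun n => ?_⟩
  exact (dist_triangle _ _ _).trans (add_le_add (hM n) (hR (mem_range_self n)))

end IsRelocators

theorem stmt7_general [NormedAddCommGroup H] [InnerProductSpace ℝ H]
    (Γ : Set ℝ) (α : ℝ) (hα : α ∈ Ioo (0 : ℝ) 1)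
    (T : ℝ → H → H) (hTav : ∀ γ ∈ Γ, AveragedNE α (T γ))
    (Q : ℝ → ℝ → H → H) (L : ℝ → ℝ → ℝ) (hQ : IsRelocators Γ T Q L)
    (hreg : UnifBddLinReg Γ T)
    (γseq : ℕ → ℝ) (hγmem : ∀ n, γseq n ∈ Γ)
    (γs : ℝ) (hγs : γs ∈ Γ) (hγlim : Tendsto γseq atTop (𝓝 γs))
    (hFix : (FixSet (T γs)).Nonempty)
    (hsum : Summable fun n => L (γseq (n + 1)) (γseq n) - 1)
    (x : ℕ → H) (hx : IsRelocatedOrbit T Q γseq x) :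
    ∃ C : ℝ, 0 ≤ C ∧ ∃ r ∈ Ioo (0 : ℝ) 1, ∀ n : ℕ,
      infDist (x n) (FixSet (T (γseq n))) ≤ C * r ^ n := by
  have hα' : α ∈ Ioc 0 1 := Ioo_subset_Ioc_self hα
  have hbdd : Bornology.IsBounded (range x) := hQ.isBounded_range_relocatedOrbit
    (fun γ hγ => (hTav γ hγ).lipschitzWith_one hα') hγmem hγs hγlim hFix hsum hx
  obtain ⟨κ, hκ, hreg_x⟩ := hreg _ (range_nonempty x) hbdd
  set ρ := √(1 - (1 - α) / α / κ ^ 2)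
  have hρ_lt : ρ < 1 := by
    have : 0 < (1 - α) / α / κ ^ 2 := div_pos (div_pos (sub_pos.2 hα.2) hα.1) (pow_pos hκ 2)
    exact (Real.sqrt_lt' one_pos).2 (by linarith)
  refine exists_le_mul_pow_of_summable infDist_nonneg
    (fun n => hQ.one_le (hγmem n) (hγmem (n + 1))) hsum ⟨Real.sqrt_nonneg _, hρ_lt⟩ fun n => ?_
  have hFix_n : (FixSet (T (γseq n))).Nonempty := (hQ.mapsTo hγs (hγmem n)).nonempty hFix
  have hL : 0 ≤ L (γseq (n + 1)) (γseq n) :=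
    zero_le_one.trans (hQ.one_le (hγmem n) (hγmem (n + 1)))
  calc infDist (x (n + 1)) (FixSet (T (γseq (n + 1))))
      ≤ L (γseq (n + 1)) (γseq n) * infDist (T (γseq n) (x n)) (FixSet (T (γseq n))) := by
        rw [hx n]
        exact hQ.infDist_le (hγmem n) (hγmem (n + 1)) hFix_n _
    _ ≤ L (γseq (n + 1)) (γseq n) * (ρ * infDist (x n) (FixSet (T (γseq n)))) := by
        gcongr
        exact (hTav _ (hγmem n)).infDist_map_le_sqrt_mul hα' hκ hFix_n
          (hreg_x _ (mem_range_self n) _ (hγmem n))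

/-- under bounded linear regularity, the distances of the relocated
fixed-point iterates to the fixed-point sets converge `R`-linearly to zero. -/
theorem stmt7 [NormedAddCommGroup H] [InnerProductSpace ℝ H] [CompleteSpace H]
    (Γ : Set ℝ) (hΓne : Γ.Nonempty) (hΓ : Γ ⊆ Set.Ioi (0 : ℝ))
    (α : ℝ) (hα : α ∈ Set.Ioo (0 : ℝ) 1)
    (T : ℝ → H → H) (hTav : ∀ γ ∈ Γ, AveragedNE α (T γ))
    (hFix : ∀ γ ∈ Γ, (FixSet (T γ)).Nonempty)
    (Q : ℝ → ℝ → H → H) (L : ℝ → ℝ → ℝ)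
    (hQ : IsRelocators Γ T Q L)
    (hA : AssumptionA Γ T Q)
    (hcont : ContinuousOn (fun p : H × ℝ => T p.2 p.1) (Set.univ ×ˢ Γ))
    (hreg : UnifBddLinReg Γ T)
    (γseq : ℕ → ℝ) (hγmem : ∀ n, γseq n ∈ Γ)
    (γs : ℝ) (hγs : γs ∈ Γ) (hγlin : RLinearTo γseq γs)
    (hsum : Summable fun n => L (γseq (n + 1)) (γseq n) - 1)
    (x : ℕ → H)
    (hrec : ∀ n : ℕ, x (n + 1) = Q (γseq (n + 1)) (γseq n) (T (γseq n) (x n))) :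
    ∃ C : ℝ, 0 ≤ C ∧ ∃ r ∈ Set.Ioo (0 : ℝ) 1, ∀ n : ℕ,
      Metric.infDist (x n) (FixSet (T (γseq n))) ≤ C * r ^ n := by
  exact stmt7_general Γ α hα T hTav Q L hQ hreg γseq hγmem γs hγs hγlin.tendsto (hFix γs hγs)
    hsum x hrec
end

section
/- Let H be a real Hilbert space, Γ ⊆ (0,∞) a nonempty set, β ∈ [0,1), (T_γ)_{γ∈Γ} a family of β-contractions on H with Fix T_γ ≠ ∅ for all γ ∈ Γ, and (Q_{δ←γ})_{δ,γ∈Γ} fixed-point relocators for (T_γ)_{γ∈Γ} with Lipschitz constants (L_{δ←γ})_{δ,γ∈Γ} in [1,∞). Suppose: Assumption A holds; the map (x,γ) ↦ T_γx is continuous on H × Γ; (γ_n)_{n∈ℕ} ⊆ Γ converges R-linearly to some γ* ∈ Γ; and ∑_{n∈ℕ}(L_{γ_{n+1}←γ_n} − 1) < +∞. Given x₀ ∈ H, define x_{n+1} := Q_{γ_{n+1}←γ_n}(T_{γ_n}x_n) for all n ∈ ℕ. Then: (i) (dist(x_n, Fix T_{γ_n}))_{n∈ℕ} converges R-linearly to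 zero; and (ii) there exists x ∈ Fix T_{γ*} such that both (x_n)_{n∈ℕ} and (T_{γ_n}x_n)_{n∈ℕ} converge R-linearly to x. -/
variable {H : Type*}

/-!
Fix `p ∈ Fix T_{γ*}` and let `Q_{γ_n←γ*} p` be its relocation along the parameter sequence. By the
cocycle identity, one step of the iteration multiplies the distance from `x_n` to the relocated
point by at most `L_{γ_{n+1}←γ_n} β`, which is eventually below a fixed `ρ < 1`; hence
`x_n - Q_{γ_n←γ*} p` tends to `0` geometrically. Assumption A, applied to the single pair `(p, γ*)`,
transfers the geometric rate of `γ_n → γ*` to `Q_{γ_n←γ*} p → Q_{γ*←γ*} p`, and `Q_{γ*←γ*} p = p`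
because `Q_{γ*←γ*}` is idempotent and injective on `Fix T_{γ*}`.
-/

open Filter Asymptotics Topology

theorem isBigO_pow_of_eventually_norm_succ_le {E : Type*} [SeminormedAddCommGroup E] {u : ℕ → E}
    {r : ℝ} (hr : 0 < r) (h : ∀ᶠ n in atTop, ‖u (n + 1)‖ ≤ r * ‖u n‖) :
    u =O[atTop] fun n => r ^ n := by
  obtain ⟨N, hN⟩ := eventually_atTop.1 h
  refine IsBigO.of_bound (‖u N‖ / r ^ N) (eventually_atTop.2 ⟨N, fun n hn => ?_⟩)
  obtain ⟨k, rfl⟩ := Nat.exists_eq_add_of_le hn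
  calc ‖u (N + k)‖
      ≤ r ^ k * ‖u N‖ :=
        le_geom (u := fun j => ‖u (N + j)‖) hr.le k fun j _ => hN (N + j) (Nat.le_add_right N j)
    _ = ‖u N‖ / r ^ N * ‖r ^ (N + k)‖ := by
        rw [Real.norm_of_nonneg (by positivity), pow_add]
        field_simp

theorem eventually_mul_le_of_summable_sub_one {a : ℕ → ℝ} {β ρ : ℝ}
    (ha : Summable fun n => a n - 1) (hβρ : β < ρ) : ∀ᶠ n in atTop, a n * β ≤ ρ := by
  have htendsto : Tendsto (fun n => a n * β) atTop (𝓝 β) := by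
    simpa using (ha.tendsto_atTop_zero.add_const 1).mul_const β
  exact htendsto.eventually_le_const hβρ

section RLinearTo

variable {E F : Type*} [NormedAddCommGroup E] [NormedAddCommGroup F]

theorem rLinearTo_iff_exists_isBigO {x : ℕ → E} {p : E} :
    RLinearTo x p ↔ ∃ r ∈ Set.Ioo (0 : ℝ) 1, (fun n => x n - p) =O[atTop] fun n => r ^ n := by
  constructor
  · rintro ⟨C, -, r, hr, hx⟩
    refine ⟨r, hr, IsBigO.of_bound C (Eventually.of_forall fun n => ?_)⟩
    rw [Real.norm_of_nonneg (pow_nonneg hr.1.le n)]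
    exact hx n
  · rintro ⟨r, hr, hx⟩
    obtain ⟨C, hC, hbound⟩ := bound_of_isBigO_nat_atTop hx
    refine ⟨C, hC.le, r, hr, fun n => ?_⟩
    have hn := hbound (pow_pos hr.1 n).ne'
    rwa [Real.norm_of_nonneg (pow_nonneg hr.1.le n)] at hn

theorem RLinearTo.of_isBigO {x : ℕ → E} {p : E} {y : ℕ → F} {q : F} (hy : RLinearTo y q)
    (hxy : (fun n => x n - p) =O[atTop] fun n => y n - q) : RLinearTo x p := by
  obtain ⟨r, hr, hyr⟩ := rLinearTo_iff_exists_isBigO.1 hy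
  exact rLinearTo_iff_exists_isBigO.2 ⟨r, hr, hxy.trans hyr⟩

theorem RLinearTo.of_sub {x y : ℕ → E} {p : E} (hxy : RLinearTo (fun n => x n - y n) 0)
    (hy : RLinearTo y p) : RLinearTo x p := by
  obtain ⟨r, hr, hxyr⟩ := rLinearTo_iff_exists_isBigO.1 hxy
  obtain ⟨s, hs, hys⟩ := rLinearTo_iff_exists_isBigO.1 hy
  have pow_isBigO_max {t : ℝ} (ht : 0 < t) (htm : t ≤ max r s) :
      (fun n : ℕ => t ^ n) =O[atTop] fun n => max r s ^ n :=
    IsBigO.of_norm_le fun n => by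
      rw [Real.norm_of_nonneg (pow_nonneg ht.le n)]
      exact pow_le_pow_left₀ ht.le htm n
  refine rLinearTo_iff_exists_isBigO.2 ⟨max r s, ⟨lt_max_of_lt_left hr.1, max_lt hr.2 hs.2⟩, ?_⟩
  simpa using (hxyr.trans (pow_isBigO_max hr.1 (le_max_left r s))).add
    (hys.trans (pow_isBigO_max hs.1 (le_max_right r s)))

theorem RLinearTo.of_eventually_norm_succ_sub_le {x : ℕ → E} {p : E} {ρ : ℝ} (hρ : ρ < 1)
    (h : ∀ᶠ n in atTop, ‖x (n + 1) - p‖ ≤ ρ * ‖x n - p‖) : RLinearTo x p := by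
  obtain ⟨r, hr, hr1⟩ := exists_between (max_lt hρ one_pos)
  obtain ⟨hρr, hr0⟩ := max_lt_iff.1 hr
  refine rLinearTo_iff_exists_isBigO.2
    ⟨r, ⟨hr0, hr1⟩, isBigO_pow_of_eventually_norm_succ_le hr0 (h.mono fun n hn => ?_)⟩
  exact hn.trans (by gcongr)

end RLinearTo

section Relocators

variable [NormedAddCommGroup H] {Γ : Set ℝ} {T : ℝ → H → H} {Q : ℝ → ℝ → H → H}
  {L : ℝ → ℝ → ℝ} {p : H} {β γ γs δ : ℝ}

theorem norm_apply_sub_le_of_mem_fixSet {S : H → H}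
    (hS : ∀ x y : H, ‖S x - S y‖ ≤ β * ‖x - y‖) (hp : p ∈ FixSet S) (x : H) :
    ‖S x - p‖ ≤ β * ‖x - p‖ := by
  have hSp : S p = p := hp
  simpa only [hSp] using hS x p

theorem IsRelocators.apply_mem_fixSet (hQ : IsRelocators Γ T Q L) (hγ : γ ∈ Γ) (hδ : δ ∈ Γ)
    (hp : p ∈ FixSet (T γ)) : Q δ γ p ∈ FixSet (T δ) :=
  (hQ.1 γ hγ δ hδ).mapsTo hp

theorem IsRelocators.self_apply_eq (hQ : IsRelocators Γ T Q L) (hγ : γ ∈ Γ)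
    (hp : p ∈ FixSet (T γ)) : Q γ γ p = p :=
  (hQ.1 γ hγ γ hγ).injOn (hQ.apply_mem_fixSet hγ hγ hp) hp (hQ.2.2.1 γ hγ γ hγ γ hγ p hp)

theorem IsRelocators.norm_step_sub_le (hQ : IsRelocators Γ T Q L) (hγs : γs ∈ Γ) (hγ : γ ∈ Γ)
    (hδ : δ ∈ Γ) (hT : ∀ x y : H, ‖T γ x - T γ y‖ ≤ β * ‖x - y‖) (hp : p ∈ FixSet (T γs)) (x : H) :
    ‖Q δ γ (T γ x) - Q δ γs p‖ ≤ L δ γ * β * ‖x - Q γ γs p‖ := by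
  obtain ⟨one_le_L, lipschitz⟩ := hQ.2.2.2 γ hγ δ hδ
  have hfix : Q γ γs p ∈ FixSet (T γ) := hQ.apply_mem_fixSet hγs hγ hp
  calc ‖Q δ γ (T γ x) - Q δ γs p‖
      = ‖Q δ γ (T γ x) - Q δ γ (Q γ γs p)‖ := by rw [hQ.2.2.1 γs hγs γ hγ δ hδ p hp]
    _ ≤ L δ γ * ‖T γ x - Q γ γs p‖ := lipschitz _ _
    _ ≤ L δ γ * (β * ‖x - Q γ γs p‖) :=
        mul_le_mul_of_nonneg_left (norm_apply_sub_le_of_mem_fixSet hT hfix x)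
          (zero_le_one.trans one_le_L)
    _ = L δ γ * β * ‖x - Q γ γs p‖ := (mul_assoc _ _ _).symm

theorem AssumptionA.rLinearTo_relocation (hA : AssumptionA Γ T Q) {γseq : ℕ → ℝ}
    (hγmem : ∀ n, γseq n ∈ Γ) (hγs : γs ∈ Γ) (hγlin : RLinearTo γseq γs)
    (hp : p ∈ FixSet (T γs)) : RLinearTo (fun n => Q (γseq n) γs p) (Q γs γs p) := by
  have hmem : {(p, γs)} ⊆ ⋃ γ ∈ Γ, FixSet (T γ) ×ˢ ({γ} : Set ℝ) :=
    Set.singleton_subset_iff.2 (Set.mem_biUnion hγs ⟨hp, rfl⟩)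
  obtain ⟨K, -, hK⟩ := hA {(p, γs)} hmem Bornology.isBounded_singleton
  exact hγlin.of_isBigO <| IsBigO.of_bound K <|
    Eventually.of_forall fun n => hK (γseq n) (hγmem n) (p, γs) rfl

theorem IsRelocators.rLinearTo_sub_relocation (hQ : IsRelocators Γ T Q L) {γseq : ℕ → ℝ}
    (hT : ∀ γ ∈ Γ, ∀ x y : H, ‖T γ x - T γ y‖ ≤ β * ‖x - y‖) (hγmem : ∀ n, γseq n ∈ Γ)
    (hγs : γs ∈ Γ) {ρ : ℝ} (hρ : ρ < 1)
    (hrate : ∀ᶠ n in atTop, L (γseq (n + 1)) (γseq n) * β ≤ ρ) (hp : p ∈ FixSet (T γs))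
    {x : ℕ → H} (hrec : ∀ n, x (n + 1) = Q (γseq (n + 1)) (γseq n) (T (γseq n) (x n))) :
    RLinearTo (fun n => x n - Q (γseq n) γs p) 0 := by
  refine .of_eventually_norm_succ_sub_le hρ (hrate.mono fun n hn => ?_)
  rw [sub_zero, sub_zero, hrec n]
  exact (hQ.norm_step_sub_le hγs (hγmem n) (hγmem (n + 1)) (hT _ (hγmem n)) hp (x n)).trans
    (by gcongr)

end Relocators

theorem stmt9_general [NormedAddCommGroup H] {Γ : Set ℝ} {β ρ : ℝ} {T : ℝ → H → H}
    (hT : ∀ γ ∈ Γ, ∀ x y : H, ‖T γ x - T γ y‖ ≤ β * ‖x - y‖)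
    {Q : ℝ → ℝ → H → H} {L : ℝ → ℝ → ℝ} (hQ : IsRelocators Γ T Q L) (hA : AssumptionA Γ T Q)
    {γseq : ℕ → ℝ} (hγmem : ∀ n, γseq n ∈ Γ) {γs : ℝ} (hγs : γs ∈ Γ) (hγlin : RLinearTo γseq γs)
    (hρ : ρ < 1) (hrate : ∀ᶠ n in atTop, L (γseq (n + 1)) (γseq n) * β ≤ ρ)
    {p : H} (hp : p ∈ FixSet (T γs))
    {x : ℕ → H} (hrec : ∀ n, x (n + 1) = Q (γseq (n + 1)) (γseq n) (T (γseq n) (x n))) :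
    RLinearTo (fun n => Metric.infDist (x n) (FixSet (T (γseq n)))) 0 ∧
      RLinearTo x p ∧ RLinearTo (fun n => T (γseq n) (x n)) p := by
  have hfix (n : ℕ) : Q (γseq n) γs p ∈ FixSet (T (γseq n)) :=
    hQ.apply_mem_fixSet hγs (hγmem n) hp
  have hrelocation : RLinearTo (fun n => Q (γseq n) γs p) p := by
    simpa only [hQ.self_apply_eq hγs hp] using hA.rLinearTo_relocation hγmem hγs hγlin hp
  have hsub : RLinearTo (fun n => x n - Q (γseq n) γs p) 0 :=
    hQ.rLinearTo_sub_relocation hT hγmem hγs hρ hrate hp hrec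
  have hTsub : RLinearTo (fun n => T (γseq n) (x n) - Q (γseq n) γs p) 0 :=
    hsub.of_isBigO <| IsBigO.of_bound β <| Eventually.of_forall fun n => by
      simpa only [sub_zero] using
        norm_apply_sub_le_of_mem_fixSet (hT _ (hγmem n)) (hfix n) (x n)
  have hdist : RLinearTo (fun n => Metric.infDist (x n) (FixSet (T (γseq n)))) 0 :=
    hsub.of_isBigO <| isBigO_of_le atTop fun n => by
      rw [sub_zero, sub_zero, Real.norm_of_nonneg Metric.infDist_nonneg, ← dist_eq_norm]
      exact Metric.infDist_le_dist_of_mem (hfix n)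
  exact ⟨hdist, hsub.of_sub hrelocation, hTsub.of_sub hrelocation⟩

/-- for a family of `β`-contractions, the relocated fixed-point
iterates satisfy: the distances to the fixed-point sets converge `R`-linearly to zero,
and `(x_n)` and `(T_{γ_n} x_n)` converge `R`-linearly to a common fixed point of
`T_{γ*}`. -/
theorem stmt9 [NormedAddCommGroup H] [InnerProductSpace ℝ H] [CompleteSpace H]
    (Γ : Set ℝ) (hΓne : Γ.Nonempty) (hΓ : Γ ⊆ Set.Ioi (0 : ℝ))
    (β : ℝ) (hβ : β ∈ Set.Ico (0 : ℝ) 1)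
    (T : ℝ → H → H) (hT : ∀ γ ∈ Γ, ∀ x y : H, ‖T γ x - T γ y‖ ≤ β * ‖x - y‖)
    (hFix : ∀ γ ∈ Γ, (FixSet (T γ)).Nonempty)
    (Q : ℝ → ℝ → H → H) (L : ℝ → ℝ → ℝ)
    (hQ : IsRelocators Γ T Q L)
    (hA : AssumptionA Γ T Q)
    (hcont : ContinuousOn (fun p : H × ℝ => T p.2 p.1) (Set.univ ×ˢ Γ))
    (γseq : ℕ → ℝ) (hγmem : ∀ n, γseq n ∈ Γ)
    (γs : ℝ) (hγs : γs ∈ Γ) (hγlin : RLinearTo γseq γs)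
    (hsum : Summable fun n => L (γseq (n + 1)) (γseq n) - 1)
    (x : ℕ → H)
    (hrec : ∀ n : ℕ, x (n + 1) = Q (γseq (n + 1)) (γseq n) (T (γseq n) (x n))) :
    (∃ C : ℝ, 0 ≤ C ∧ ∃ r ∈ Set.Ioo (0 : ℝ) 1, ∀ n : ℕ,
      Metric.infDist (x n) (FixSet (T (γseq n))) ≤ C * r ^ n) ∧
    ∃ xs : H, xs ∈ FixSet (T γs) ∧ RLinearTo x xs ∧
      RLinearTo (fun n => T (γseq n) (x n)) xs := by
  obtain ⟨p, hp⟩ := hFix γs hγs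
  obtain ⟨ρ, hβρ, hρ⟩ := exists_between hβ.2
  obtain ⟨hdist, hx, hTx⟩ := stmt9_general hT hQ hA hγmem hγs hγlin hρ
    (eventually_mul_le_of_summable_sub_one hsum hβρ) hp hrec
  exact ⟨by simpa only [RLinearTo, sub_zero, Real.norm_of_nonneg Metric.infDist_nonneg] using hdist,
    p, hp, hx, hTx⟩
end
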